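/- Let π be a set of primes, G a group, and G_0 a subgroup of G of finite index. Let A be a ℤG-module which, regarded as a ℤG_0-module by restriction, is a ℤG_0-module quotient of some ℤG_0-module whose underlying abelian group is torsion-free, of finite rank, and π-spectral. Then A is also a ℤG-module quotient of some ℤG-module whose underlying abelian group is torsion-free, of finite rank, and π-spectral. -/

import Mathlib

/-!
Statement 19: Lemma 4.1 of the paper, on promoting quotient presentations from
a finite-index subgroup to the whole group.
-/

open CategoryTheory

noncomputable section




/-- The rational circle `ℚ/ℤ`. -/
abbrev RatCircle : Type := ℚ ⧸ AddSubgroup.zmultiples (1 : ℚ)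

/-- The quasicyclic (Prüfer) `p`-group, realized as the `p`-primary part of `ℚ/ℤ`. -/
def pruferSubgroup (p : ℕ) : AddSubgroup RatCircle where
  carrier := {x | ∃ n : ℕ, (p ^ n : ℕ) • x = 0}
  zero_mem' := ⟨0, smul_zero _⟩
  add_mem' := by
    rintro a b ⟨m, hm⟩ ⟨n, hn⟩
    refine ⟨m + n, ?_⟩
    have ha : (p ^ m * p ^ n) • a = 0 := by rw [mul_comm, mul_smul, hm, smul_zero]
    have hb : (p ^ m * p ^ n) • b = 0 := by rw [mul_smul, hn, smul_zero]
    rw [smul_add, pow_add, ha, hb, add_zero]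
  neg_mem' := by
    rintro a ⟨m, hm⟩
    exact ⟨m, by rw [smul_neg, hm, neg_zero]⟩

/-- A group has a quasicyclic `p`-section if some quotient of a subgroup is
isomorphic to the Prüfer `p`-group. -/
def HasQuasicyclicSection (G : Type*) [Group G] (p : ℕ) : Prop :=
  ∃ (H : Subgroup G) (K : Subgroup H) (_ : K.Normal),
    Nonempty ((H ⧸ K) ≃* Multiplicative (pruferSubgroup p))

/-- The spectrum of a group: the set of primes `p` such that the group has a
section isomorphic to the quasicyclic `p`-group. -/
def groupSpectrum (G : Type*) [Group G] : Set ℕ :=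
  {p | p.Prime ∧ HasQuasicyclicSection G p}

/-- The spectrum of an (additive) abelian group, via `Multiplicative`. -/
abbrev addSpectrum (A : Type*) [AddGroup A] : Set ℕ :=
  groupSpectrum (Multiplicative A)

/-- An abelian group has finite rank if its torsion-free rank and all of its
`p`-ranks are finite. -/
def FiniteRankAbelian (A : Type*) [AddCommGroup A] : Prop :=
  (∃ n : ℕ, ∀ k : ℕ, (∃ f : (Fin k →₀ ℤ) →+ A, Function.Injective f) → k ≤ n) ∧
  ∀ p : ℕ, p.Prime → {a : A | (p : ℕ) • a = 0}.Finite

/-- A group has finite rank (in the sense appropriate for abelian groups: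
finite torsion-free rank and finite `p`-ranks). -/
def FiniteRankGroup (G : Type*) [Group G] : Prop :=
  (∃ n : ℕ, ∀ k : ℕ,
    (∃ f : Multiplicative (Fin k →₀ ℤ) →* G, Function.Injective f) → k ≤ n) ∧
  ∀ p : ℕ, p.Prime → {g : G | g ^ p = 1}.Finite

/-- A solvable group of finite rank: a solvable group all of whose abelian
sections have finite rank. -/
def SolvableOfFiniteRank (G : Type*) [Group G] : Prop :=
  IsSolvable G ∧
    ∀ (H : Subgroup G) (K : Subgroup H) (_ : K.Normal),
      (∀ x y : H ⧸ K, x * y = y * x) → FiniteRankGroup (H ⧸ K)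

/-- A group is virtually abelian. -/
def VirtuallyAbelian (G : Type*) [Group G] : Prop :=
  ∃ H : Subgroup G, H.index ≠ 0 ∧ ∀ x y : H, x * y = y * x

/-- A `ℤG`-module (given as an object of `Rep ℤ G`) whose underlying abelian group
is torsion-free, of finite rank, and `π`-spectral. -/
def NiceRep {G : Type} [Group G] (π : Set ℕ) (M : Rep.{0} ℤ G) : Prop :=
  (∀ m : M, m ≠ 0 → ¬IsOfFinAddOrder m) ∧ FiniteRankAbelian M ∧ addSpectrum M ⊆ π

/-- The class `𝒰` of solvable groups of finite rank. -/
def MemClassU (G : Type) [Group G] : Prop :=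
  SolvableOfFiniteRank G ∧
  ∃ (N : Subgroup G) (_ : N.Normal),
    Group.IsNilpotent N ∧
    Group.FG (G ⧸ N) ∧ VirtuallyAbelian (G ⧸ N) ∧
    ∃ (r : ℕ) (T : Fin (r + 1) → Subgroup G),
      Monotone T ∧ T 0 = ⊥ ∧
      ((T (Fin.last r) : Set G) = {g : G | g ∈ N ∧ IsOfFinOrder g}) ∧
      (∀ (i : Fin (r + 1)) (g t : G), t ∈ T i → g * t * g⁻¹ ∈ T i) ∧
      (∀ (i : Fin r) (n t : G), n ∈ N → t ∈ T i.succ →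
        n * t * n⁻¹ * t⁻¹ ∈ T i.castSucc) ∧
      (∀ i : Fin r, (T i.castSucc).relIndex (T i.succ) = 0 →
        ∃ M : Rep.{0} ℤ (G ⧸ N), NiceRep (groupSpectrum G) M ∧
          ∃ φ : M → G,
            (∀ m : M, φ m ∈ T i.succ) ∧
            (∀ m m' : M, (φ (m + m'))⁻¹ * (φ m * φ m') ∈ T i.castSucc) ∧
            (∀ t : G, t ∈ T i.succ → ∃ m : M, (φ m)⁻¹ * t ∈ T i.castSucc) ∧
            (∀ (g : G) (m : M),
              (φ (M.ρ (QuotientGroup.mk g) m))⁻¹ * (g * φ m * g⁻¹) ∈ T i.castSucc))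



theorem prufer_div (p : ℕ) (hp : p.Prime) (x : pruferSubgroup p) :
    ∃ y : pruferSubgroup p, p • y = x := by
  obtain ⟨x, n, hn⟩ := x
  obtain ⟨q, rfl⟩ := QuotientAddGroup.mk_surjective x
  have h : p • (QuotientAddGroup.mk (q / p) : RatCircle) = QuotientAddGroup.mk q := by
    have hp0 : (p : ℚ) ≠ 0 := by exact_mod_cast hp.ne_zero
    rw [← QuotientAddGroup.mk_nsmul, nsmul_eq_mul, mul_div_cancel₀ _ hp0]
  refine ⟨⟨QuotientAddGroup.mk (q / p), n + 1, ?_⟩, ?_⟩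
  · rw [pow_succ, mul_smul, h, hn]
  · exact Subtype.ext h

theorem prufer_div_pow (p : ℕ) (hp : p.Prime) (n : ℕ) (x : pruferSubgroup p) :
    ∃ y : pruferSubgroup p, (p ^ n) • y = x := by
  induction n generalizing x with
  | zero => exact ⟨x, by simp⟩
  | succ n ih =>
    obtain ⟨y, rfl⟩ := prufer_div p hp x
    obtain ⟨z, rfl⟩ := ih y
    exact ⟨z, by rw [pow_succ', mul_smul]⟩

theorem ratCircle_smul_eq_zero (n : ℕ) (q : ℚ) :
    n • (QuotientAddGroup.mk q : RatCircle) = 0 ↔ ∃ a : ℤ, (a : ℚ) = n * q := by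
  rw [← QuotientAddGroup.mk_nsmul, QuotientAddGroup.eq_zero_iff, AddSubgroup.mem_zmultiples_iff]
  simp

theorem prufer_gen (p : ℕ) (hp : p.Prime) (n : ℕ) (x s : pruferSubgroup p)
    (hx : (p ^ n) • x = 0) (hs : (p ^ n) • s ≠ 0) : ∃ k : ℤ, k • s = x := by
  classical
  obtain ⟨x, hx'⟩ := x
  obtain ⟨s, hs'⟩ := s
  obtain ⟨q, rfl⟩ := QuotientAddGroup.mk_surjective x
  obtain ⟨r, rfl⟩ := QuotientAddGroup.mk_surjective s
  have hx2 : (p ^ n) • (QuotientAddGroup.mk q : RatCircle) = 0 := congrArg Subtype.val hx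
  have hs2 : (p ^ n) • (QuotientAddGroup.mk r : RatCircle) ≠ 0 := fun h => hs (Subtype.ext h)
  clear hx hs
  change ∃ m : ℕ, (p ^ m) • (QuotientAddGroup.mk r : RatCircle) = 0 at hs'
  have hm := Nat.find_spec hs'
  have hmin := fun {k} => Nat.find_min (m := k) hs'
  set m := Nat.find hs' with hmdef
  have hnm : n < m := by
    by_contra hcon
    push Not at hcon
    apply hs2
    obtain ⟨d, rfl⟩ := Nat.exists_eq_add_of_le hcon
    rw [pow_add, mul_comm, mul_smul, hm, smul_zero]
  obtain ⟨d, hd⟩ := Nat.exists_eq_add_of_lt hnm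
  have hmin' := hmin (k := n + d) (by omega)
  rw [hd] at hm
  rw [ratCircle_smul_eq_zero] at hm hx2 hmin'
  obtain ⟨b, hb⟩ := hm
  obtain ⟨a, ha⟩ := hx2
  have hp0 : (p : ℚ) ≠ 0 := by exact_mod_cast hp.ne_zero
  have hcop : IsCoprime b ((p : ℤ) ^ (n + d + 1)) := by
    apply IsCoprime.pow_right
    refine IsCoprime.symm ?_
    rw [Prime.coprime_iff_not_dvd (Nat.prime_iff_prime_int.mp hp)]
    rintro ⟨c, rfl⟩
    refine hmin' ⟨c, ?_⟩
    push_cast at hb ⊢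
    apply mul_left_cancel₀ hp0
    rw [hb]; ring
  obtain ⟨u, v, huv⟩ := hcop
  refine ⟨a * p ^ (d + 1) * u, Subtype.ext ?_⟩
  change (a * p ^ (d + 1) * u) • (QuotientAddGroup.mk r : RatCircle) = QuotientAddGroup.mk q
  rw [← QuotientAddGroup.mk_zsmul, QuotientAddGroup.eq, AddSubgroup.mem_zmultiples_iff]
  refine ⟨a * p ^ (d + 1) * v, ?_⟩
  have huv' : (u : ℚ) * b + v * p ^ (n + d + 1) = 1 := by exact_mod_cast huv
  push_cast at hb ha
  have hpn : (p : ℚ) ^ n ≠ 0 := pow_ne_zero _ hp0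
  simp only [zsmul_eq_mul, mul_one]
  push_cast
  apply mul_left_cancel₀ hpn
  have e1 : (p : ℚ) ^ n * (-(a * p ^ (d + 1) * u * r) + q) = -(a * u * (p ^ (n + d + 1) * r)) + p ^ n * q := by
    ring
  rw [e1, ← hb, ← ha]
  have e2 : (p : ℚ) ^ n * (a * p ^ (d + 1) * v) = a * (v * p ^ (n + d + 1)) := by ring
  rw [e2]
  linear_combination (a : ℚ) * huv'

/-- A flexible form of having a quasicyclic section. -/
def QSec (A : Type) [AddCommGroup A] (p : ℕ) : Prop :=
  ∃ (H : Type) (_ : AddCommGroup H) (i : H →+ A) (f : H →+ pruferSubgroup p),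
    Function.Injective i ∧ Function.Surjective f

theorem QSec.of_injective {A B : Type} [AddCommGroup A] [AddCommGroup B] {p : ℕ}
    (j : A →+ B) (hj : Function.Injective j) (h : QSec A p) : QSec B p := by
  obtain ⟨H, _, i, f, hi, hf⟩ := h
  exact ⟨H, _, j.comp i, f, hj.comp hi, hf⟩

theorem QSec.of_prod {A C : Type} [AddCommGroup A] [AddCommGroup C] {p : ℕ} (hp : p.Prime)
    (h : QSec (A × C) p) : QSec A p ∨ QSec C p := by
  obtain ⟨H, _, i, f, hi, hf⟩ := h
  let g : H →+ A := (AddMonoidHom.fst A C).comp i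
  by_cases hk : ∀ n : ℕ, ∃ x : g.ker, (p ^ n) • f x ≠ 0
  · right
    refine ⟨g.ker, inferInstance, ((AddMonoidHom.snd A C).comp i).comp g.ker.subtype,
      f.comp g.ker.subtype, ?_, ?_⟩
    · intro x y hxy
      apply Subtype.ext
      apply hi
      have hx : (i x).1 = 0 := x.2
      have hy : (i y).1 = 0 := y.2
      exact Prod.ext (hx.trans hy.symm) hxy
    · rintro x
      obtain ⟨n, hn⟩ := x.2
      obtain ⟨s, hs⟩ := hk n
      obtain ⟨k, hk⟩ := prufer_gen p hp n x (f s) (Subtype.ext hn) hs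
      exact ⟨k • s, by rw [map_zsmul]; exact hk⟩
  · left
    push Not at hk
    obtain ⟨n, hn⟩ := hk
    let f' : H →+ pruferSubgroup p := (p ^ n) • f
    have hf' : g.ker ≤ f'.ker := fun x hx => hn ⟨x, hx⟩
    refine ⟨H ⧸ g.ker, inferInstance, QuotientAddGroup.kerLift g, QuotientAddGroup.lift g.ker f' hf',
      QuotientAddGroup.kerLift_injective g, ?_⟩
    intro x
    obtain ⟨y, rfl⟩ := prufer_div_pow p hp n x
    obtain ⟨z, rfl⟩ := hf y
    exact ⟨QuotientAddGroup.mk z, rfl⟩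

/-- Splitting off the first coordinate. -/
def consSplit (A : Type) [AddCommGroup A] (n : ℕ) : (Fin (n + 1) → A) →+ A × (Fin n → A) where
  toFun f := (f 0, fun i => f i.succ)
  map_zero' := rfl
  map_add' _ _ := rfl

theorem consSplit_injective (A : Type) [AddCommGroup A] (n : ℕ) :
    Function.Injective (consSplit A n) := by
  intro f g h
  funext i
  refine Fin.cases ?_ (fun j => ?_) i
  · exact congrArg Prod.fst h
  · exact congrFun (congrArg Prod.snd h) j

theorem QSec.of_pi {A : Type} [AddCommGroup A] {p : ℕ} (hp : p.Prime) (n : ℕ)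
    (h : QSec (Fin n → A) p) : QSec A p := by
  induction n with
  | zero => exact h.of_injective 0 (Function.injective_of_subsingleton _)
  | succ n ih =>
    rcases (h.of_injective _ (consSplit_injective A n)).of_prod hp with h | h
    · exact h
    · exact ih h

theorem qsec_iff {A : Type} [AddCommGroup A] {p : ℕ} :
    HasQuasicyclicSection (Multiplicative A) p ↔ QSec A p := by
  constructor
  · rintro ⟨H, K, hK, ⟨e⟩⟩
    refine ⟨Additive H, inferInstance, AddMonoidHom.mk' (fun x => (x.toMul : Multiplicative A).toAdd)
      (fun _ _ => rfl), AddMonoidHom.mk' (fun x => (e (QuotientGroup.mk x.toMul)).toAdd) ?_, ?_, ?_⟩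
    · intro a b
      rw [toMul_add, QuotientGroup.mk_mul, map_mul, toAdd_mul]
    · intro x y hxy
      exact Subtype.ext hxy
    · intro x
      obtain ⟨y, hy⟩ := e.surjective (Multiplicative.ofAdd x)
      obtain ⟨z, rfl⟩ := QuotientGroup.mk_surjective y
      exact ⟨Additive.ofMul z, congrArg Multiplicative.toAdd hy⟩
  · rintro ⟨H, _, i, f, hi, hf⟩
    let i' : Multiplicative H →* Multiplicative A := i.toMultiplicative
    let f' : Multiplicative H →* Multiplicative (pruferSubgroup p) := f.toMultiplicative
    have hi' : Function.Injective i' := hi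
    have hf' : Function.Surjective f' := hf
    let e : Multiplicative H ≃* i'.range := i'.ofInjective hi'
    let F : i'.range →* Multiplicative (pruferSubgroup p) := f'.comp e.symm.toMonoidHom
    exact ⟨i'.range, F.ker, inferInstance,
      ⟨QuotientGroup.quotientKerEquivOfSurjective F (hf'.comp e.symm.surjective)⟩⟩

/-- Finite torsion-free rank. -/
def FinTFR (A : Type) [AddCommGroup A] : Prop :=
  ∃ n : ℕ, ∀ k : ℕ, (∃ f : (Fin k →₀ ℤ) →+ A, Function.Injective f) → k ≤ n

theorem finTFR_iff (A : Type) [AddCommGroup A] :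
    FinTFR A ↔ Module.rank ℤ A < Cardinal.aleph0 := by
  constructor
  · rintro ⟨n, hn⟩
    refine lt_of_le_of_lt (rank_le (n := n) ?_) (Cardinal.natCast_lt_aleph0 (n := n))
    intro s hs
    apply hn
    have h2 : LinearIndependent ℤ (fun i : Fin s.card => ((s.equivFin.symm i : s) : A)) :=
      hs.comp _ s.equivFin.symm.injective
    exact ⟨(Finsupp.linearCombination ℤ _).toAddMonoidHom, h2⟩
  · intro h
    obtain ⟨n, hn⟩ := Cardinal.lt_aleph0.mp h
    refine ⟨n, ?_⟩
    rintro k ⟨f, hf⟩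
    have := LinearMap.rank_le_of_injective f.toIntLinearMap hf
    rw [hn] at this
    simpa using this

theorem FinTFR.of_injective {A B : Type} [AddCommGroup A] [AddCommGroup B]
    (j : A →+ B) (hj : Function.Injective j) (h : FinTFR B) : FinTFR A := by
  obtain ⟨n, hn⟩ := h
  refine ⟨n, ?_⟩
  rintro k ⟨f, hf⟩
  exact hn k ⟨j.comp f, hj.comp hf⟩

theorem FinTFR.prod {A B : Type} [AddCommGroup A] [AddCommGroup B]
    (hA : FinTFR A) (hB : FinTFR B) : FinTFR (A × B) := by
  rw [finTFR_iff] at *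
  rw [← LinearMap.rank_range_add_rank_ker (LinearMap.fst ℤ A B)]
  apply Cardinal.add_lt_aleph0
  · exact (Submodule.rank_le _).trans_lt hA
  · refine lt_of_le_of_lt (LinearMap.rank_le_of_injective
      ((LinearMap.snd ℤ A B).comp (LinearMap.ker (LinearMap.fst ℤ A B)).subtype) ?_) hB
    intro x y hxy
    apply Subtype.ext
    have hx : x.1.1 = 0 := x.2
    have hy : y.1.1 = 0 := y.2
    exact Prod.ext (hx.trans hy.symm) hxy

theorem FinTFR.pi {A : Type} [AddCommGroup A] (hA : FinTFR A) (n : ℕ) : FinTFR (Fin n → A) := by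
  induction n with
  | zero => exact hA.of_injective 0 (Function.injective_of_subsingleton _)
  | succ n ih => exact (hA.prod ih).of_injective _ (consSplit_injective A n)

theorem NiceRep.of_injective {G G' : Type} [Group G] [Group G'] {π : Set ℕ} {M : Rep.{0} ℤ G}
    {N : Rep.{0} ℤ G'} (n : ℕ) (j : M →+ (Fin n → N)) (hj : Function.Injective j)
    (h : NiceRep π N) : NiceRep π M := by
  obtain ⟨h1, ⟨h2, -⟩, h3⟩ := h
  have htf : ∀ m : M, ∀ k : ℕ, 0 < k → k • m = 0 → m = 0 := by
    intro m k hk hkm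
    apply hj
    rw [map_zero]
    funext i
    by_contra hne
    apply h1 _ hne
    rw [isOfFinAddOrder_iff_nsmul_eq_zero]
    refine ⟨k, hk, ?_⟩
    have := congrFun (congrArg j hkm) i
    rwa [map_nsmul, map_zero] at this
  refine ⟨?_, ⟨?_, ?_⟩, ?_⟩
  · intro m hm hfin
    rw [isOfFinAddOrder_iff_nsmul_eq_zero] at hfin
    obtain ⟨k, hk, hkm⟩ := hfin
    exact hm (htf m k hk hkm)
  · exact FinTFR.of_injective j hj (FinTFR.pi h2 n)
  · intro p hp
    refine (Set.finite_singleton (0 : M)).subset ?_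
    intro m hm
    exact htf m p hp.pos hm
  · rintro p ⟨hp, hs⟩
    exact h3 ⟨hp, qsec_iff.mpr (((qsec_iff.mp hs).of_injective j hj).of_pi hp n)⟩

/-- Evaluation of coinduced functions at finitely many points. -/
def coindEval {G : Type} [Group G] {G₀ : Subgroup G} (M₀ : Rep.{0} ℤ G₀) {n : ℕ} (t : Fin n → G) :
    Rep.coind G₀.subtype M₀ →+ (Fin n → M₀) where
  toFun f := fun i => f.1 (t i)
  map_zero' := rfl
  map_add' _ _ := rfl

theorem coind_desc_surjective {k : Type} [CommRing k] {G : Type} [Group G] {G₀ : Subgroup G}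
    [G₀.FiniteIndex] [DecidableRel (QuotientGroup.rightRel G₀)]
    (M₀ : Rep.{0} k G₀) (A : Rep.{0} k G) (φ : M₀ ⟶ Rep.res G₀.subtype A)
    (hφ : Function.Surjective φ.hom) :
    Function.Surjective
      ((Rep.indCoindIso M₀).inv ≫ (Rep.indResHomEquiv G₀.subtype M₀ A).symm φ).hom := by
  intro a
  obtain ⟨x, hx⟩ := hφ a
  refine ⟨(Rep.indCoindIso M₀).hom.hom (Representation.IndV.mk G₀.subtype M₀.ρ 1 x), ?_⟩
  have h1 : (Rep.indResHomEquiv G₀.subtype M₀ A) ((Rep.indResHomEquiv G₀.subtype M₀ A).symm φ) = φ :=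
    LinearEquiv.apply_symm_apply _ _
  have h2 : ((Rep.indResHomEquiv G₀.subtype M₀ A).symm φ).hom
      (Representation.IndV.mk G₀.subtype M₀.ρ 1 x) = φ.hom x :=
    congrArg (fun ψ : M₀ ⟶ Rep.res G₀.subtype A => ψ.hom x) h1
  rw [← hx, ← h2]
  have h3 := congrArg (fun ψ => ψ.hom (Representation.IndV.mk G₀.subtype M₀.ρ 1 x))
    (Iso.hom_inv_id_assoc (Rep.indCoindIso M₀) ((Rep.indResHomEquiv G₀.subtype M₀ A).symm φ))
  exact h3

/-- Let `π` be a set of primes, `G` a group and `G₀` a subgroup of finite index.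
Let `A` be a `ℤG`-module which, as a `ℤG₀`-module, is a quotient of a
`ℤG₀`-module whose underlying abelian group is torsion-free, of finite rank and
`π`-spectral.  Then `A` is a quotient of a `ℤG`-module whose underlying abelian
group is torsion-free, of finite rank and `π`-spectral. -/
theorem quotient_of_nice_of_finite_index (π : Set ℕ) (G : Type) [Group G]
    (G₀ : Subgroup G) (hindex : G₀.index ≠ 0) (A : Rep.{0} ℤ G)
    (h₀ : ∃ (M₀ : Rep.{0} ℤ G₀) (φ : M₀ ⟶ (Rep.resFunctor G₀.subtype).obj A),
      NiceRep π M₀ ∧ Function.Surjective φ.hom) :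
    ∃ (M : Rep.{0} ℤ G) (φ : M ⟶ A), NiceRep π M ∧ Function.Surjective φ.hom := by
  classical
  obtain ⟨M₀, φ, hM, hφ⟩ := h₀
  have : G₀.FiniteIndex := ⟨hindex⟩
  refine ⟨Rep.coind G₀.subtype M₀,
    (Rep.indCoindIso M₀).inv ≫ (Rep.indResHomEquiv G₀.subtype M₀ A).symm φ, ?_, ?_⟩
  · have : Finite (Quotient (QuotientGroup.rightRel G₀)) :=
      Finite.of_equiv _ (QuotientGroup.quotientRightRelEquivQuotientLeftRel G₀).symm
    let e := Finite.equivFin (Quotient (QuotientGroup.rightRel G₀))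
    let t : Fin (Nat.card (Quotient (QuotientGroup.rightRel G₀))) → G := fun i => (e.symm i).out
    refine hM.of_injective _ (coindEval M₀ t) ?_
    intro f f' hff
    apply Subtype.ext
    funext g
    have h1 : f.1 (t (e ⟦g⟧)) = f'.1 (t (e ⟦g⟧)) := congrFun hff (e ⟦g⟧)
    have h2 : (QuotientGroup.rightRel G₀) (t (e ⟦g⟧)) g := by
      apply Quotient.exact
      simp [t]
    rw [QuotientGroup.rightRel_apply] at h2
    have h3 : g = G₀.subtype ⟨g * (t (e ⟦g⟧))⁻¹, h2⟩ * t (e ⟦g⟧) := by simp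
    rw [h3, f.2, f'.2, h1]
  · exact coind_desc_surjective M₀ A φ hφ
end
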